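/- arXiv:2604.20097 — 2 statements merged into one kernel-verified Lean document; each statement's English description precedes it below -/
import Mathlib

section
/- Let G be a finite simple connected graph and let S be a Carathéodory independent set of G with |S| ≥ 2. Then in the subgraph of G induced by the cycle convex hull hull(S), no vertex has degree exactly 1 (i.e., the induced subgraph has no leaves). -/
open SimpleGraph

/-- A set `S` is cycle convex in `G` if no vertex `w` outside `S` is such that the
subgraph induced by `S ∪ {w}` contains a cycle through `w`. -/
def IsCycleConvex {V : Type*} (G : SimpleGraph V) (S : Set V) : Prop :=
  ∀ w : V, w ∉ S →
    ¬ ∃ c : (G.induce (S ∪ {w})).Walk ⟨w, Set.mem_union_right S rfl⟩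
        ⟨w, Set.mem_union_right S rfl⟩, c.IsCycle

/-- The cycle convex hull of `S`: the smallest cycle convex set containing `S`. -/
def cycleHull {V : Type*} (G : SimpleGraph V) (S : Set V) : Set V :=
  ⋂₀ {T : Set V | S ⊆ T ∧ IsCycleConvex G T}

/-- `S` is Carathéodory independent in the cycle convexity of `G`. -/
def CIndep {V : Type*} (G : SimpleGraph V) (S : Set V) : Prop :=
  ∃ p ∈ cycleHull G S, ∀ a ∈ S, p ∉ cycleHull G (S \ {a})

/-- The Carathéodory number of `G` in the cycle convexity. -/
noncomputable def carNumber {V : Type*} (G : SimpleGraph V) : ℕ :=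
  sSup {n : ℕ | ∃ S : Set V, CIndep G S ∧ S.ncard = n}

theorem isCycleConvex_iff {V : Type*} {G : SimpleGraph V} {S : Set V} :
    IsCycleConvex G S ↔
      ∀ w ∉ S, ∀ c : G.Walk w w, c.IsCycle → ¬ ∀ x ∈ c.support, x ∈ S ∪ {w} := by
  refine forall₂_congr fun w hw => ⟨fun h c hc hs => h ⟨c.induce _ hs, ?_⟩, ?_⟩
  · apply Walk.IsCycle.of_map (f := (Embedding.induce (S ∪ {w})).toHom)
    rwa [Walk.map_induce]
  · rintro h ⟨c, hc⟩
    refine h (c.map (Embedding.induce (S ∪ {w})).toHom)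
      (hc.map Subtype.val_injective) fun x hx => ?_
    obtain ⟨y, -, rfl⟩ := List.mem_map.1 (Walk.support_map _ c ▸ hx)
    exact y.2

theorem subset_cycleHull {V : Type*} (G : SimpleGraph V) (S : Set V) : S ⊆ cycleHull G S :=
  Set.subset_sInter fun _ hT => hT.1

theorem cycleHull_subset {V : Type*} {G : SimpleGraph V} {S T : Set V} (hST : S ⊆ T)
    (hT : IsCycleConvex G T) : cycleHull G S ⊆ T :=
  Set.sInter_subset_of_mem ⟨hST, hT⟩

theorem isCycleConvex_cycleHull {V : Type*} (G : SimpleGraph V) (S : Set V) :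
    IsCycleConvex G (cycleHull G S) := by
  refine isCycleConvex_iff.2 fun w hw c hc hs => hw ?_
  refine Set.mem_sInter.2 fun T hT => by_contra fun hwT => ?_
  exact isCycleConvex_iff.1 hT.2 w hwT c hc fun x hx =>
    Set.union_subset_union_left _ (cycleHull_subset hT.1 hT.2) (hs x hx)

/-- A vertex with at most one neighbour in `H` lies on no cycle contained in `H`. -/
theorem notMem_support_of_isCycle {V : Type*} {G : SimpleGraph V} {H : Set V} {v w : V}
    (hv : (H ∩ G.neighborSet v).Subsingleton) {c : G.Walk w w} (hc : c.IsCycle)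
    (hs : ∀ x ∈ c.support, x ∈ H) : v ∉ c.support := by
  intro hvc
  have hsub : c.toSubgraph.neighborSet v ⊆ H ∩ G.neighborSet v := fun x hx =>
    ⟨hs x (c.mem_verts_toSubgraph.1 (Subgraph.Adj.snd_mem hx)), Subgraph.Adj.adj_sub hx⟩
  have h2 := hc.ncard_neighborSet_toSubgraph_eq_two hvc
  obtain ⟨x, y, hxy, h⟩ := Set.ncard_eq_two.1 h2
  exact hxy (hv (hsub (h ▸ Or.inl rfl)) (hsub (h ▸ Or.inr rfl)))

/-- Deleting a vertex with at most one neighbour in a cycle convex set preserves convexity. -/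
theorem IsCycleConvex.sdiff_singleton {V : Type*} {G : SimpleGraph V} {H : Set V} {v : V}
    (hH : IsCycleConvex G H) (hvH : v ∈ H) (hv : (H ∩ G.neighborSet v).Subsingleton) :
    IsCycleConvex G (H \ {v}) := by
  refine isCycleConvex_iff.2 fun w hw c hc hs => ?_
  by_cases hwH : w ∈ H
  · have hwv : w = v := by_contra fun hne => hw ⟨hwH, hne⟩
    subst hwv
    refine notMem_support_of_isCycle hv hc (fun x hx => ?_) c.start_mem_support
    rcases hs x hx with h | rfl
    exacts [h.1, hvH]
  · exact isCycleConvex_iff.1 hH w hwH c hc fun x hx =>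
      Set.union_subset_union_left _ Set.sdiff_subset (hs x hx)

/-- Adding to a cycle convex subset `T` of a cycle convex set `H` a vertex of `H` with at most one
neighbour in `H` preserves convexity. -/
theorem IsCycleConvex.insert_leaf {V : Type*} {G : SimpleGraph V} {H T : Set V} {v : V}
    (hH : IsCycleConvex G H) (hT : IsCycleConvex G T) (hTH : T ⊆ H) (hvH : v ∈ H)
    (hv : (H ∩ G.neighborSet v).Subsingleton) : IsCycleConvex G (insert v T) := by
  refine isCycleConvex_iff.2 fun w hw c hc hs => ?_
  have hsub : insert v T ⊆ H := Set.insert_subset hvH hTH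
  by_cases hwH : w ∈ H
  · have hvc : v ∉ c.support := notMem_support_of_isCycle hv hc fun x hx =>
      (Set.union_subset hsub (Set.singleton_subset_iff.2 hwH)) (hs x hx)
    refine isCycleConvex_iff.1 hT w (fun h => hw (Or.inr h)) c hc fun x hx => ?_
    rcases hs x hx with (rfl | h) | h
    exacts [absurd hx hvc, Or.inl h, Or.inr h]
  · exact isCycleConvex_iff.1 hH w hwH c hc fun x hx =>
      Set.union_subset_union_left _ hsub (hs x hx)

/-- Lemma 1(f): the cycle convex hull of a Caratheodory independent set of size at
least 2 induces a subgraph with no vertex of degree exactly one. -/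
theorem stmt_4 {V : Type*} [Fintype V] (G : SimpleGraph V) (hG : G.Connected)
    (S : Set V) (hS : CIndep G S) (h2 : 2 ≤ S.ncard) :
    ∀ v : cycleHull G S, ((G.induce (cycleHull G S)).neighborSet v).ncard ≠ 1 := by
  rintro ⟨v, hvH⟩ hdeg
  obtain ⟨⟨u, huH⟩, hu⟩ := Set.ncard_eq_one.1 hdeg
  have hleaf : (cycleHull G S ∩ G.neighborSet v).Subsingleton := by
    have key : ∀ x ∈ cycleHull G S ∩ G.neighborSet v, x = u := fun x hx =>
      congrArg Subtype.val (show (⟨x, hx.1⟩ : cycleHull G S) = ⟨u, huH⟩ from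
        Set.mem_singleton_iff.1 (hu ▸ hx.2))
    exact fun x hx y hy => (key x hx).trans (key y hy).symm
  have hconv := isCycleConvex_cycleHull G S
  have hdiff := hconv.sdiff_singleton hvH hleaf
  have hvS : v ∈ S := by
    by_contra hvS
    exact (cycleHull_subset
      (Set.subset_sdiff_singleton (subset_cycleHull G S) hvS) hdiff hvH).2 rfl
  obtain ⟨p, hpS, hp⟩ := hS
  have hTH : cycleHull G (S \ {v}) ⊆ cycleHull G S :=
    cycleHull_subset (Set.sdiff_subset.trans (subset_cycleHull G S)) hconv
  have hins := hconv.insert_leaf (isCycleConvex_cycleHull G (S \ {v})) hTH hvH hleaf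
  have hS_sub : S ⊆ insert v (cycleHull G (S \ {v})) :=
    Set.sdiff_singleton_subset_iff.1 (subset_cycleHull G _)
  have hpv : p = v := (cycleHull_subset hS_sub hins hpS).resolve_right (hp v hvS)
  obtain ⟨a, haS, hav⟩ := Set.exists_ne_of_one_lt_ncard h2 v
  exact hp a haS (subset_cycleHull G _ ⟨hpv ▸ hvS, fun h => hav (h.symm.trans hpv)⟩)
end

section
/- Let G be a finite simple connected graph of order n ≥ 3. Then car(G) = n − 1 if and only if G is isomorphic to the cycle C_n. -/
open SimpleGraph

theorem IsCycleConvex.cycleHull_eq {V : Type*} {G : SimpleGraph V} {S : Set V}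
    (hS : IsCycleConvex G S) : cycleHull G S = S :=
  Set.Subset.antisymm (fun _ hx => hx S ⟨subset_rfl, hS⟩) (subset_cycleHull G S)

/-- A vertex with two distinct neighbours joined inside a convex set belongs to that set. -/
theorem IsCycleConvex.mem_of_reachable {V : Type*} {G : SimpleGraph V} {T : Set V}
    (hT : IsCycleConvex G T) {p x y : V} (hx : x ∈ T) (hy : y ∈ T) (hxy : x ≠ y)
    (hpx : G.Adj p x) (hpy : G.Adj p y)
    (hr : (G.induce T).Reachable ⟨x, hx⟩ ⟨y, hy⟩) : p ∈ T := by
  by_contra hp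
  obtain ⟨q, hq⟩ := hr.exists_isPath
  let φ := G.induceHomOfLE (Set.subset_union_left : T ⊆ T ∪ {p})
  let p' : ↥(T ∪ {p}) := ⟨p, Set.mem_union_right T rfl⟩
  let q' := q.map φ.toHom
  have hq' : q'.IsPath := hq.map φ.injective
  have hpq : p' ∉ q'.support := by
    intro h
    rw [Walk.support_map, List.mem_map] at h
    obtain ⟨z, -, hz⟩ := h
    have : (z : V) = p := congrArg Subtype.val hz
    exact hp (this ▸ z.2)
  have hpx' : (G.induce (T ∪ {p})).Adj p' (φ ⟨x, hx⟩) := hpx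
  have hpy' : (G.induce (T ∪ {p})).Adj (φ ⟨y, hy⟩) p' := hpy.symm
  refine hT p hp ⟨Walk.cons hpx' (q'.concat hpy'), ?_⟩
  rw [Walk.cons_isCycle_iff]
  refine ⟨hq'.concat hpq hpy', ?_⟩
  rw [Walk.edges_concat, List.concat_eq_append, List.mem_append, not_or]
  refine ⟨fun h => hpq (Walk.fst_mem_support_of_mem_edges _ h), fun h => ?_⟩
  rw [List.mem_singleton, Sym2.eq_swap, Sym2.eq_iff] at h
  rcases h with ⟨h, -⟩ | ⟨-, h⟩
  · exact hxy (congrArg Subtype.val h)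
  · have hpy : p = y := congrArg Subtype.val h
    exact hp (hpy ▸ hy)

theorem mem_cycleHull_of_reachable {V : Type*} {G : SimpleGraph V} {A : Set V}
    {p x y : V} (hx : x ∈ A) (hy : y ∈ A) (hxy : x ≠ y)
    (hpx : G.Adj p x) (hpy : G.Adj p y)
    (hr : (G.induce A).Reachable ⟨x, hx⟩ ⟨y, hy⟩) : p ∈ cycleHull G A := by
  rintro T ⟨hAT, hT⟩
  exact hT.mem_of_reachable (hAT hx) (hAT hy) hxy hpx hpy
    (hr.map (G.induceHomOfLE hAT).toHom)

theorem reachable_induce_of_adj_succ {V : Type*} {G : SimpleGraph V} {A : Set V} (f : ℕ → V)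
    {a b : ℕ} (hab : a ≤ b) (hadj : ∀ k, a ≤ k → k < b → G.Adj (f k) (f (k + 1)))
    (hA : ∀ k, a ≤ k → k ≤ b → f k ∈ A) :
    (G.induce A).Reachable ⟨f a, hA a le_rfl hab⟩ ⟨f b, hA b hab le_rfl⟩ := by
  induction b, hab using Nat.le_induction with
  | base => exact Reachable.refl _
  | succ b hab ih =>
    refine (ih (fun k h1 h2 => hadj k h1 (by lia)) (fun k h1 h2 => hA k h1 (by lia))).trans ?_
    refine Adj.reachable ?_
    exact hadj b hab (by lia)

open Fin.NatCast Fin.CommRing in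
/-- Every cycle of a cycle graph visits all vertices. -/
theorem eq_univ_of_isCycle_induce {V : Type*} {G : SimpleGraph V} {m : ℕ}
    (e : G ≃g cycleGraph (m + 3)) {A : Set V} {w : A} {c : (G.induce A).Walk w w}
    (hc : c.IsCycle) : A = Set.univ := by
  classical
  have step : ∀ u ∈ c.support, ∃ v ∈ c.support, e v = e u + 1 := by
    intro u hu
    have hc' := hc.rotate hu
    set d := c.rotate u hu
    have hnb : ∀ x : A, (G.induce A).Adj u x → e x = e u - 1 ∨ e x = e u + 1 := by
      intro x hx
      have : e x ∈ (cycleGraph (m + 1 + 2)).neighborSet (e u) := e.map_adj_iff.2 hx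
      rwa [cycleGraph_neighborSet] at this
    have hsup : ∀ i, d.getVert i ∈ c.support := fun i =>
      (c.mem_support_rotate_iff u hu).1 (d.getVert_mem_support i)
    rcases hnb _ (d.adj_snd hc'.not_nil) with h1 | h1
    · rcases hnb _ (d.adj_penultimate hc'.not_nil).symm with h2 | h2
      · exact absurd (Subtype.ext (e.injective (h1.trans h2.symm))) hc'.snd_ne_penultimate
      · exact ⟨_, hsup _, h2⟩
    · exact ⟨_, hsup _, h1⟩
  have all : ∀ k : ℕ, ∃ v ∈ c.support, e v = e w + (k : Fin (m + 3)) := by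
    intro k
    induction k with
    | zero => exact ⟨w, c.start_mem_support, by simp⟩
    | succ k ih =>
      obtain ⟨v, hv, hvk⟩ := ih
      obtain ⟨v', hv', h⟩ := step v hv
      exact ⟨v', hv', by rw [h, hvk]; push_cast; ring⟩
  refine Set.eq_univ_of_forall fun v => ?_
  obtain ⟨u, -, hu⟩ := all (e v - e w).val
  rw [Fin.cast_val_eq_self, add_sub_cancel] at hu
  exact e.injective hu ▸ u.2

theorem CIndep.ncard_le {V : Type*} [Fintype V] {G : SimpleGraph V} (hn : 2 ≤ Fintype.card V)
    {S : Set V} (hS : CIndep G S) : S.ncard ≤ Fintype.card V - 1 := by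
  obtain ⟨p, -, hp⟩ := hS
  have hlt : S.ncard ≠ Fintype.card V := by
    intro h
    have hu : S = Set.univ := by
      refine Set.eq_of_subset_of_ncard_le (Set.subset_univ S) ?_
      rw [Set.ncard_univ, Nat.card_eq_fintype_card, h]
    subst hu
    have : Nontrivial V := Fintype.one_lt_card_iff_nontrivial.1 (by lia)
    obtain ⟨a, ha⟩ := exists_ne p
    exact hp a trivial (subset_cycleHull G _ ⟨trivial, ha.symm⟩)
  have : S.ncard ≤ Fintype.card V := by
    simpa using Set.ncard_le_ncard (Set.subset_univ S)
  lia

open Fin.NatCast Fin.CommRing in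
theorem cIndep_compl_singleton_of_iso {V : Type*} {G : SimpleGraph V} {m : ℕ}
    (e : G ≃g cycleGraph (m + 3)) : CIndep G {e.symm 0}ᶜ := by
  let f : ℕ → V := fun k => e.symm (k : Fin (m + 3))
  have hadj : ∀ k, G.Adj (f k) (f (k + 1)) := by
    intro k
    refine e.symm.map_adj_iff.2 ?_
    rw [cycleGraph_adj]
    right
    push_cast
    ring
  have hf : ∀ i j, i < m + 3 → j < m + 3 → f i = f j → i = j := by
    intro i j hi hj h
    have := congrArg Fin.val (e.symm.injective h)
    rwa [Fin.val_cast_of_lt hi, Fin.val_cast_of_lt hj] at this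
  have h0 : f 0 = e.symm 0 := by simp [f]
  have hlast : f (m + 2 + 1) = e.symm 0 := by
    simp [f]
  have hA : ∀ k, 1 ≤ k → k ≤ m + 2 → f k ∈ ({e.symm 0}ᶜ : Set V) := by
    intro k h1 h2 h
    have := hf k 0 (by lia) (by lia) (Eq.trans h h0.symm)
    lia
  refine ⟨e.symm 0, ?_, ?_⟩
  · refine mem_cycleHull_of_reachable (hA 1 le_rfl (by lia)) (hA (m + 2) (by lia) le_rfl) ?_
      (h0 ▸ hadj 0) (hlast ▸ (hadj (m + 2)).symm)
      (reachable_induce_of_adj_succ f (by lia) (fun k _ _ => hadj k) hA)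
    intro h
    have := hf _ _ (by lia) (by lia) h
    lia
  · intro a ha
    have hconv : IsCycleConvex G ({e.symm 0}ᶜ \ {a}) := by
      rintro w hw ⟨c, hc⟩
      have hu := eq_univ_of_isCycle_induce e hc
      have h1 : e.symm 0 ∈ ({e.symm 0}ᶜ \ {a} ∪ {w} : Set V) := hu ▸ trivial
      have h2 : a ∈ ({e.symm 0}ᶜ \ {a} ∪ {w} : Set V) := hu ▸ trivial
      simp at h1 h2
      exact ha (h2.trans h1.symm)
    rw [hconv.cycleHull_eq]
    simp

theorem cycleGraph_adj_of_lt {n i j : ℕ} (hij : i < j) (hj : j < n) :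
    (cycleGraph n).Adj ⟨i, hij.trans hj⟩ ⟨j, hj⟩ ↔ j = i + 1 ∨ (i = 0 ∧ j = n - 1 ∧ 2 ≤ n) := by
  rw [cycleGraph_adj', Fin.sub_val_of_le (a := ⟨j, hj⟩) (b := ⟨i, hij.trans hj⟩) (by simp; lia),
    Fin.val_sub]
  simp only
  rw [Nat.mod_eq_of_lt (by lia)]
  lia

/-- If every cycle through `p` is Hamiltonian, then the graph is a cycle. -/
theorem nonempty_iso_cycleGraph {V : Type*} [Fintype V] {G : SimpleGraph V} {p : V}
    (hp : p ∈ cycleHull G {p}ᶜ) (hpa : ∀ a ≠ p, p ∉ cycleHull G ({p}ᶜ \ {a})) :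
    Nonempty (G ≃g cycleGraph (Fintype.card V)) := by
  have hnc : ¬ IsCycleConvex G {p}ᶜ := fun h => by
    rw [h.cycleHull_eq] at hp
    exact hp rfl
  obtain ⟨w, hw, c, hc⟩ : ∃ w, ∃ _ : w ∉ ({p}ᶜ : Set V),
      ∃ c : (G.induce ({p}ᶜ ∪ {w})).Walk ⟨w, Set.mem_union_right _ rfl⟩
        ⟨w, Set.mem_union_right _ rfl⟩, c.IsCycle := by
    simpa [IsCycleConvex] using hnc
  obtain rfl : w = p := by simpa using hw
  have h3 := hc.three_le_length
  generalize hl : c.length = l at h3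
  let f : ℕ → V := fun k => (c.getVert k : V)
  have f0 : f 0 = w := by simp [f]
  have fl : f l = w := by simp [f, ← hl]
  have hadj : ∀ k, k < l → G.Adj (f k) (f (k + 1)) := fun k hk =>
    c.adj_getVert_succ (hl ▸ hk)
  have hinj : ∀ i j, i < l → j < l → f i = f j → i = j := fun i j hi hj h =>
    hc.getVert_injOn' (show i ≤ c.length - 1 by lia) (show j ≤ c.length - 1 by lia)
      (Subtype.ext h)
  have hadj0 : G.Adj w (f (l - 1)) := by
    have := hadj (l - 1) (by lia)
    rw [Nat.sub_add_cancel (by lia), fl] at this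
    exact this.symm
  have hadj1 : G.Adj w (f 1) := f0 ▸ hadj 0 (by lia)
  have hne : ∀ k, 1 ≤ k → k < l → f k ≠ w := fun k h1 h2 h => by
    have := hinj k 0 h2 (by lia) (h.trans f0.symm)
    lia
  have hsurj : ∀ v, ∃ k, k < l ∧ f k = v := by
    by_contra! h
    obtain ⟨a, ha⟩ := h
    have haw : a ≠ w := fun h => ha 0 (by lia) (f0.trans h.symm)
    have hA : ∀ k, 1 ≤ k → k ≤ l - 1 → f k ∈ ({w}ᶜ \ {a} : Set V) := fun k h1 h2 =>
      ⟨hne k h1 (by lia), ha k (by lia)⟩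
    refine hpa a haw (mem_cycleHull_of_reachable (hA 1 le_rfl (by lia))
      (hA (l - 1) (by lia) le_rfl) (fun h => ?_) hadj1 hadj0
      (reachable_induce_of_adj_succ f (by lia) (fun k _ _ => hadj k (by lia)) hA))
    have := hinj _ _ (by lia) (by lia) h
    lia
  have hchord : ∀ i j, i < j → j < l → G.Adj (f i) (f j) → j = i + 1 ∨ (i = 0 ∧ j = l - 1) := by
    intro i j hij hjl hf
    by_contra! hcon
    rcases Nat.eq_zero_or_pos i with rfl | hi
    · rw [f0] at hf
      have hA : ∀ k, 1 ≤ k → k ≤ j → f k ∈ ({w}ᶜ \ {f (l - 1)} : Set V) := fun k h1 h2 =>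
        ⟨hne k h1 (by lia), fun h => by
          have := hinj _ _ (by lia) (by lia) h
          lia⟩
      refine hpa (f (l - 1)) (hne _ (by lia) (by lia))
        (mem_cycleHull_of_reachable (hA 1 le_rfl (by lia)) (hA j (by lia) le_rfl)
        (fun h => ?_) hadj1 hf
        (reachable_induce_of_adj_succ f (by lia) (fun k _ _ => hadj k (by lia)) hA))
      have := hinj _ _ (by lia) (by lia) h
      lia
    · have hA : ∀ k, 1 ≤ k → k ≤ l - 1 → k ≠ i + 1 → f k ∈ ({w}ᶜ \ {f (i + 1)} : Set V) :=
        fun k h1 h2 h3 => ⟨hne k h1 (by lia), fun h => h3 (hinj _ _ (by lia) (by lia) h)⟩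
      have hr1 := reachable_induce_of_adj_succ f hi (fun k _ _ => hadj k (by lia))
        (fun k h1 h2 => hA k h1 (by lia) (by lia))
      have hr2 := reachable_induce_of_adj_succ f (show j ≤ l - 1 by lia)
        (fun k _ _ => hadj k (by lia)) (fun k h1 h2 => hA k (by lia) (by lia) (by lia))
      have hmid : (G.induce ({w}ᶜ \ {f (i + 1)} : Set V)).Adj
        ⟨f i, hA i hi (by lia) (by lia)⟩ ⟨f j, hA j (by lia) (by lia) (by lia)⟩ := hf
      refine hpa (f (i + 1)) (hne _ (by lia) (by lia))
        (mem_cycleHull_of_reachable _ _ (fun h => ?_) hadj1 hadj0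
          (hr1.trans (hmid.reachable.trans hr2)))
      have := hinj _ _ (by lia) (by lia) h
      lia
  let g : Fin l ≃ V := Equiv.ofBijective (fun i => f i)
    ⟨fun i j h => Fin.ext (hinj i j i.2 j.2 h), fun v =>
      let ⟨k, hk, h⟩ := hsurj v
      ⟨⟨k, hk⟩, h⟩⟩
  have hcard : Fintype.card V = l := by simpa using (Fintype.card_congr g).symm
  have hiff : ∀ i j (hij : i < j) (hj : j < l),
      G.Adj (f i) (f j) ↔ (cycleGraph l).Adj ⟨i, hij.trans hj⟩ ⟨j, hj⟩ := by
    intro i j hij hj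
    rw [cycleGraph_adj_of_lt hij hj]
    constructor
    · intro h
      have := hchord i j hij hj h
      lia
    · rintro (rfl | ⟨rfl, rfl, -⟩)
      · exact hadj i (by lia)
      · exact f0 ▸ hadj0
  rw [hcard]
  refine ⟨RelIso.symm ⟨g, ?_⟩⟩
  intro i j
  change G.Adj (f i) (f j) ↔ _
  rcases lt_trichotomy i j with h | rfl | h
  · exact hiff i j h j.2
  · simp
  · rw [G.adj_comm, (cycleGraph l).adj_comm]
    exact hiff j i h i.2

/-- A finite connected graph on n ≥ 3 vertices has Caratheodory number n - 1 iff
it is isomorphic to the cycle on n vertices. -/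
theorem stmt_13 {V : Type*} [Fintype V] (G : SimpleGraph V) (hG : G.Connected)
    (hn : 3 ≤ Fintype.card V) :
    carNumber G = Fintype.card V - 1 ↔
      Nonempty (G ≃g SimpleGraph.cycleGraph (Fintype.card V)) := by
  have hub : Fintype.card V - 1 ∈ upperBounds {n : ℕ | ∃ S : Set V, CIndep G S ∧ S.ncard = n} := by
    rintro _ ⟨S, hS, rfl⟩
    exact hS.ncard_le (by lia)
  constructor
  · intro h
    have hne : {n : ℕ | ∃ S : Set V, CIndep G S ∧ S.ncard = n}.Nonempty := by
      by_contra hemp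
      rw [Set.not_nonempty_iff_eq_empty] at hemp
      rw [carNumber, hemp, csSup_empty, bot_eq_zero] at h
      lia
    obtain ⟨S, ⟨p, hp, hpa⟩, hS⟩ := Nat.sSup_mem hne ⟨_, hub⟩
    replace hS : S.ncard = Fintype.card V - 1 := hS.trans h
    have hpS : p ∉ S := by
      intro hpS
      obtain ⟨a, haS, hap⟩ := Set.exists_ne_of_one_lt_ncard (by lia : 1 < S.ncard) p
      exact hpa a haS (subset_cycleHull G _ ⟨hpS, hap.symm⟩)
    obtain rfl : S = {p}ᶜ := by
      refine Set.eq_of_subset_of_ncard_le (fun x hx hxp => hpS (hxp ▸ hx)) ?_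
      rw [Set.ncard_compl, Set.ncard_singleton, Nat.card_eq_fintype_card, hS]
    exact nonempty_iso_cycleGraph hp hpa
  · rintro ⟨e⟩
    refine le_antisymm (csSup_le' hub) (le_csSup ⟨_, hub⟩ ?_)
    obtain ⟨m, hm⟩ := Nat.exists_eq_add_of_le' hn
    have hS : ∃ p : V, CIndep G {p}ᶜ := by
      rw [hm] at e
      exact ⟨_, cIndep_compl_singleton_of_iso e⟩
    obtain ⟨p, hp⟩ := hS
    refine ⟨_, hp, ?_⟩
    rw [Set.ncard_compl, Set.ncard_singleton, Nat.card_eq_fintype_card]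
end
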